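/- arXiv:2410.09602 — 12 statements merged into one kernel-verified Lean document; each statement's English description precedes it below -/
import Mathlib

section
/- Let p be a prime and R a commutative ring of characteristic p. Let H ∈ R[X] be a polynomial whose second formal derivative vanishes, and let D : R[X] → R[X] be the R-linear map D(f) = H · f′ (formal derivative). Then the p-fold composite of D satisfies D^p(f) = (H′)^{p−1} · H · f′ for every f ∈ R[X]; equivalently, D^p = (H′)^{p−1} · D as R-linear endomorphisms of R[X]. -/
open Polynomial

lemma aux_field (p : ℕ) [Fact p.Prime] (K : Type*) [Field K] [CharP K p] (x y : K) (hy : y ≠ 0) :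
    ∏ i ∈ Finset.range p, (x - (i : K) * y) = x ^ p - y ^ (p - 1) * x := by
  have hp : p.Prime := Fact.out
  have h1 : ∏ a : ZMod p, (X - C a) = (X ^ p - X : (ZMod p)[X]) := by
    have hr : (X ^ p - X : (ZMod p)[X]).roots = Finset.univ.val := by
      simpa only [ZMod.card] using FiniteField.roots_X_pow_card_sub_X (ZMod p)
    have hm : (X ^ p - X : (ZMod p)[X]).Monic :=
      monic_X_pow_sub (by rw [degree_X]; exact_mod_cast hp.one_lt)
    have := prod_multiset_X_sub_C_of_monic_of_roots_card_eq hm (by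
      rw [hr, FiniteField.X_pow_card_sub_X_natDegree_eq _ hp.one_lt]
      simp [ZMod.card])
    rw [hr] at this
    exact this
  have h2 := congrArg (eval₂ (ZMod.castHom (dvd_refl p) K) (x / y)) h1
  rw [eval₂_finsetProd] at h2
  simp only [eval₂_sub, eval₂_X, eval₂_C, eval₂_pow] at h2
  have h3 : ∏ a : ZMod p, (x / y - ZMod.castHom (dvd_refl p) K a)
      = ∏ i ∈ Finset.range p, (x / y - (i : K)) := by
    symm
    refine Finset.prod_bij (fun i _ => (i : ZMod p)) (by simp) ?_ ?_ (by simp)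
    · intro a ha b hb h
      rw [ZMod.natCast_eq_natCast_iff'] at h
      rwa [Nat.mod_eq_of_lt (Finset.mem_range.1 ha), Nat.mod_eq_of_lt (Finset.mem_range.1 hb)] at h
    · intro b _
      exact ⟨b.val, Finset.mem_range.2 (ZMod.val_lt b), by simp⟩
  rw [h3] at h2
  have h4 : ∏ i ∈ Finset.range p, (x - (i : K) * y)
      = y ^ p * ∏ i ∈ Finset.range p, (x / y - (i : K)) := by
    conv_rhs => rw [← Finset.card_range p, ← Finset.prod_const, Finset.card_range]
    rw [← Finset.prod_mul_distrib]
    refine Finset.prod_congr rfl fun i _ => ?_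
    field_simp
  rw [h4, h2]
  obtain ⟨n, rfl⟩ : ∃ n, p = n + 1 := ⟨p - 1, by have := hp.pos; omega⟩
  simp only [Nat.add_sub_cancel, div_pow]
  field_simp
  ring

lemma aux_poly (p : ℕ) [Fact p.Prime] :
    ∏ i ∈ Finset.range p, ((X : (ZMod p)[X][X]) - C ((i : (ZMod p)[X]) * X))
      = X ^ p - C (X ^ (p - 1)) * X := by
  let K := FractionRing (ZMod p)[X][X]
  have hinj : Function.Injective (algebraMap (ZMod p)[X][X] K) := IsFractionRing.injective _ _
  have : CharP K p := charP_of_injective_algebraMap hinj p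
  apply hinj
  have := aux_field p K (algebraMap (ZMod p)[X][X] K X) (algebraMap (ZMod p)[X][X] K (C X))
    (by rw [Ne, map_eq_zero_iff _ hinj]; simp)
  simp only [map_prod, map_sub, map_mul, map_pow, map_natCast]
  exact this

theorem stmt_0 (p : ℕ) (hp : p.Prime) (R : Type*) [CommRing R] [CharP R p]
    (H : R[X]) (hH : derivative (derivative H) = 0) (f : R[X]) :
    (fun g : R[X] => H * derivative g)^[p] f
      = derivative H ^ (p - 1) * (H * derivative f) := by
  have : Fact p.Prime := ⟨hp⟩
  let D : Module.End R R[X] := (LinearMap.mulLeft R H) ∘ₗ derivative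
  have hD : ∀ g, D g = H * derivative g := fun g => rfl
  let e : (ZMod p)[X] →+* R[X] := eval₂RingHom (C.comp (ZMod.castHom (dvd_refl p) R)) (derivative H)
  have heX : e X = derivative H := by simp [e]
  have he : ∀ q, derivative (e q) = 0 := by
    intro q
    induction q using Polynomial.induction_on' with
    | add a b ha hb => simp [ha, hb]
    | monomial n a => simp [e, eval₂_monomial, derivative_pow, hH]
  let φ : (ZMod p)[X] →+* Module.End R R[X] := (Algebra.lmul R R[X]).toRingHom.comp e
  have hφ : ∀ q g, φ q g = e q * g := fun q g => rfl
  have hc : ∀ q, Commute (φ q) D := by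
    intro q
    refine LinearMap.ext fun g => ?_
    simp only [Module.End.mul_apply, hφ, hD, derivative_mul, he]
    ring
  let Φ := eval₂RingHom' φ D hc
  have hX : Φ X = D := by simp [Φ, eval₂RingHom']
  have hC : ∀ q, Φ (C q) = φ q := by intro q; simp [Φ, eval₂RingHom']
  have key : ∀ n g, Φ (∏ i ∈ Finset.range n, ((X : (ZMod p)[X][X]) - C ((i : (ZMod p)[X]) * X))) g
      = H ^ n * derivative^[n] g := by
    intro n
    induction n with
    | zero => intro g; simp
    | succ n ih =>
      intro g
      rw [Finset.prod_range_succ, mul_comm, map_mul, Module.End.mul_apply, ih, map_sub, hX, hC,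
        LinearMap.sub_apply, hφ, hD, map_mul e, heX, map_natCast e, derivative_mul, derivative_pow,
        Function.iterate_succ_apply']
      cases n with
      | zero => simp
      | succ n => simp only [Nat.add_sub_cancel, map_natCast]; ring
  have hz : derivative^[p] f = 0 := by
    ext m
    rw [coeff_iterate_derivative, nsmul_eq_mul,
      (CharP.cast_eq_zero_iff R p _).2 ((Nat.dvd_factorial hp.pos le_rfl).trans
        (Nat.factorial_dvd_descFactorial _ _))]
    simp
  have h := key p f
  rw [aux_poly, hz, mul_zero, map_sub, map_mul, map_pow, hX, hC, LinearMap.sub_apply,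
    Module.End.mul_apply, hφ, map_pow, heX, hD, Module.End.pow_apply, sub_eq_zero] at h
  exact h
end

section
/- Let p be a prime and R a commutative ring of characteristic p. Let H ∈ R[X] be a polynomial whose second formal derivative vanishes. For N ∈ ℤ define the R-linear operator θ_N : R[X] → R[X] by θ_N(f) = H·f′ + N·H′·f, where N acts through the canonical map ℤ → R. Then for every N ∈ ℤ the composite θ_{N+p−1} ∘ θ_{N+p−2} ∘ ⋯ ∘ θ_{N+1} ∘ θ_N is the zero map on R[X]. -/
open Polynomial

/-- The operator `θ_N : f ↦ H·f′ + N·H′·f`, with `N : ℤ` acting through `ℤ → R`. -/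
noncomputable def thetaOp {R : Type*} [CommRing R] (H : R[X]) (N : ℤ) (f : R[X]) : R[X] :=
  H * derivative f + (N : R) • (derivative H * f)

/-- `thetaIter H n N f` is `(θ_{N+n-1} ∘ ⋯ ∘ θ_{N+1} ∘ θ_N) f`. -/
noncomputable def thetaIter {R : Type*} [CommRing R] (H : R[X]) : ℕ → ℤ → R[X] → R[X]
  | 0, _, f => f
  | n + 1, N, f => thetaIter H n (N + 1) (thetaOp H N f)

/-- Leibniz rule for iterated derivatives of `thetaOp`. -/
lemma iter_thetaOp {R : Type*} [CommRing R] (H : R[X])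
    (hH : derivative (derivative H) = 0) (N : ℤ) (f : R[X]) (j : ℕ) :
    derivative^[j] (thetaOp H N f) = H * derivative^[j + 1] f
      + ((N : R[X]) + j) * (derivative H * derivative^[j] f) := by
  induction j with
  | zero =>
    simp [thetaOp, smul_eq_C_mul]
  | succ j ih =>
    rw [Function.iterate_succ_apply', ih]
    simp only [derivative_add, derivative_mul, hH, derivative_intCast, derivative_natCast,
      ← Function.iterate_succ_apply']
    push_cast
    ring

/-- Closed formula for the iterates. -/
lemma thetaIter_formula {R : Type*} [CommRing R] (H : R[X])
    (hH : derivative (derivative H) = 0) (n : ℕ) : ∀ (N : ℤ) (f : R[X]),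
    thetaIter H n N f = ∑ ij ∈ Finset.HasAntidiagonal.antidiagonal n, ((n.choose ij.1 : ℕ) : R[X]) *
      ((∏ i ∈ Finset.range ij.2, ((N : R[X]) + ij.1 + i)) * H ^ ij.1 * derivative H ^ ij.2
        * derivative^[ij.1] f) := by
  induction n with
  | zero => intro N f; simp [thetaIter]
  | succ n ih =>
    intro N f
    rw [thetaIter, ih, Finset.sum_antidiagonal_choose_succ_mul
      (fun a b => (∏ i ∈ Finset.range b, ((N : R[X]) + a + i)) * H ^ a * derivative H ^ b
        * derivative^[a] f), ← Finset.sum_add_distrib]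
    refine Finset.sum_congr rfl ?_
    rintro ⟨a, b⟩ hab
    rw [Finset.HasAntidiagonal.mem_antidiagonal] at hab
    have hc : n.choose b = n.choose a := (Nat.choose_symm_of_eq_add (by simp at hab; omega))
    simp only [iter_thetaOp H hH, hc]
    rw [Finset.prod_range_succ']
    have e1 : ∀ i : ℕ, (((N + 1 : ℤ) : R[X]) + a + i) = (N : R[X]) + a + ((i + 1 : ℕ) : R[X]) := by
      intro i; push_cast; ring
    have e2 : ∀ i : ℕ, ((N : R[X]) + ((a + 1 : ℕ) : R[X]) + i)
        = (N : R[X]) + a + ((i + 1 : ℕ) : R[X]) := by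
      intro i; push_cast; ring
    simp only [e1, e2]
    generalize ∏ i ∈ Finset.range b, ((N : R[X]) + a + ((i + 1 : ℕ) : R[X])) = P
    push_cast
    ring

/-- Let `p` be a prime and `R` a commutative ring of characteristic `p`.  Let `H ∈ R[X]`
have vanishing second formal derivative.  Then for every `N : ℤ` the composite
`θ_{N+p−1} ∘ ⋯ ∘ θ_{N+1} ∘ θ_N` is the zero map on `R[X]`. -/
theorem stmt_2 (p : ℕ) (hp : p.Prime) (R : Type*) [CommRing R] [CharP R p]
    (H : R[X]) (hH : derivative (derivative H) = 0) (N : ℤ) (f : R[X]) :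
    thetaIter H p N f = 0 := by
  rw [thetaIter_formula H hH]
  refine Finset.sum_eq_zero ?_
  rintro ⟨a, b⟩ hab
  rw [Finset.HasAntidiagonal.mem_antidiagonal] at hab
  simp only at hab ⊢
  rcases Nat.eq_zero_or_pos a with rfl | ha
  · have hb : b = p := by omega
    subst hb
    have : ∏ i ∈ Finset.range b, ((N : R[X]) + ((0 : ℕ) : R[X]) + i) = 0 := by
      have hpos : (0 : ℤ) < b := by exact_mod_cast hp.pos
      have h0 := Int.emod_nonneg (-N) hpos.ne'
      have h1 := Int.emod_lt_of_pos (-N) hpos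
      refine Finset.prod_eq_zero (i := ((-N) % b).toNat) (by simp; omega) ?_
      have h2 : (((N + ((-N) % b).toNat : ℤ)) : R[X]) = 0 := by
        rw [CharP.intCast_eq_zero_iff R[X] b, Int.toNat_of_nonneg h0]
        have := Int.emod_add_mul_ediv (-N) b
        exact ⟨-((-N) / b), by linarith⟩
      push_cast at h2 ⊢
      simpa using h2
    rw [this]; ring
  · rcases Nat.eq_zero_or_pos b with rfl | hb
    · have : a = p := by omega
      subst this
      have : derivative^[a] f = 0 := by
        rw [← Polynomial.factorial_smul_hasseDeriv]
        have h : ((a.factorial : ℕ) : R[X]) = 0 :=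
          (CharP.cast_eq_zero_iff R[X] a _).2 (Nat.dvd_factorial hp.pos le_rfl)
        simp [nsmul_eq_mul, h]
      rw [this]; ring
    · have h : ((p.choose a : ℕ) : R[X]) = 0 :=
        (CharP.cast_eq_zero_iff R[X] p _).2 (hp.dvd_choose_self ha.ne' (by omega))
      rw [h, zero_mul]
end

section
/- Let p be a prime, R an integral domain of characteristic p, and set H := X − X^p ∈ R[X]. Let f ∈ R[X] be a polynomial not divisible by H, and let N ∈ ℤ. Then H divides H·f′ + N·f (with N acting through the canonical map ℤ → R) if and only if p divides N. -/
open Polynomial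

/-- Let `p` be a prime, `R` an integral domain of characteristic `p`, and `H := X − X^p`.
Let `f ∈ R[X]` be a polynomial not divisible by `H`, and `N : ℤ`.  Then
`H ∣ H·f′ + N·f` (with `N` acting through `ℤ → R`) if and only if `p ∣ N`. -/
theorem stmt_4 (p : ℕ) (hp : p.Prime) (R : Type*) [CommRing R] [IsDomain R] [CharP R p]
    (f : R[X]) (hf : ¬ (X - X ^ p ∣ f)) (N : ℤ) :
    (X - X ^ p) ∣ ((X - X ^ p) * derivative f + (N : R) • f) ↔ (p : ℤ) ∣ N := by
  rw [dvd_add_right (dvd_mul_right _ _)]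
  constructor
  · intro h
    by_contra hN
    apply hf
    have hc : IsCoprime (p : ℤ) N :=
      (Nat.prime_iff_prime_int.mp hp).coprime_iff_not_dvd.mpr hN
    obtain ⟨a, b, hab⟩ := hc
    have h1 : (b : R) * (N : R) = 1 := by
      have h2 := congrArg (Int.cast : ℤ → R) hab
      push_cast at h2
      simpa using h2
    have h3 : f = C (b : R) * ((N : R) • f) := by
      rw [← smul_eq_C_mul, smul_smul, h1, one_smul]
    rw [h3]
    exact Dvd.dvd.mul_left h _
  · intro h
    rw [(CharP.intCast_eq_zero_iff R p N).mpr h, zero_smul]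
    exact dvd_zero _
end

section
/- Let p be a prime and R a commutative ring of characteristic p. Let H ∈ R[X] be a polynomial whose second formal derivative vanishes, and for j ∈ ℤ define θ^{(j)} : R[X] → R[X] by θ^{(j)}(f) = H·f′ − j·H′·f. Let b ∈ ℕ with b ≤ p−1 and let j ∈ ℤ with j ≡ b (mod p). Then for every f ∈ R[X], (θ^{(j+b(p−1))} ∘ ⋯ ∘ θ^{(j+(p−1))} ∘ θ^{(j)})(f) = H^{b+1} · f^{(b+1)}, where f^{(b+1)} denotes the (b+1)-st formal derivative of f. In particular the (b+1)-fold iterate is divisible by H^{b+1}. -/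
open Polynomial

/-- The operator `θ^{(j)} : f ↦ H·f′ − j·H′·f`, with `j : ℤ` acting through `ℤ → R`. -/
noncomputable def thetaDown {R : Type*} [CommRing R] (H : R[X]) (j : ℤ) (f : R[X]) : R[X] :=
  H * derivative f - (j : R) • (derivative H * f)

/-- `thetaDownIter H p n j f` is `(θ^{(j+(n−1)(p−1))} ∘ ⋯ ∘ θ^{(j+(p−1))} ∘ θ^{(j)}) f`. -/
noncomputable def thetaDownIter {R : Type*} [CommRing R] (H : R[X]) (p : ℕ) :
    ℕ → ℤ → R[X] → R[X]
  | 0, _, f => f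
  | n + 1, j, f => thetaDownIter H p n (j + ((p : ℤ) - 1)) (thetaDown H j f)

theorem iterate_derivative_thetaDown {R : Type*} [CommRing R] (H : R[X])
    (hH : derivative (derivative H) = 0) (j : ℤ) (f : R[X]) (n : ℕ) :
    derivative^[n] (thetaDown H j f) =
      H * derivative^[n + 1] f + C ((n : R) - (j : R)) * (derivative H * derivative^[n] f) := by
  induction n with
  | zero => simp [thetaDown, smul_eq_C_mul, sub_eq_add_neg]
  | succ n ih =>
    rw [Function.iterate_succ_apply', ih]
    simp only [Function.iterate_succ_apply', derivative_add, derivative_mul, derivative_C, hH,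
      C_sub, Nat.cast_succ, C_add, C_1, derivative_sub]
    ring

theorem thetaDownIter_eq (p : ℕ) (R : Type*) [CommRing R] [CharP R p]
    (H : R[X]) (hH : derivative (derivative H) = 0) (n : ℕ) :
    ∀ (j : ℤ), (p : ℤ) ∣ j + 1 - (n : ℤ) → ∀ f : R[X],
    thetaDownIter H p n j f = H ^ n * derivative^[n] f := by
  induction n with
  | zero => intro j _ f; simp [thetaDownIter]
  | succ n ih =>
    intro j hj f
    have hj' : (p : ℤ) ∣ (n : ℤ) - j := by
      obtain ⟨c, hc⟩ := hj
      exact ⟨-c, by push_cast at hc; linarith⟩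
    have h0 : (n : R) - (j : R) = 0 := by
      have := (CharP.intCast_eq_zero_iff R p _).2 hj'
      simpa using this
    have h1 : (p : ℤ) ∣ j + ((p : ℤ) - 1) + 1 - (n : ℤ) := by
      obtain ⟨c, hc⟩ := hj'
      exact ⟨1 - c, by linarith⟩
    rw [thetaDownIter, ih _ h1, iterate_derivative_thetaDown H hH, h0]
    simp only [C_0]
    ring

/-- Let `p` be a prime and `R` a commutative ring of characteristic `p`.  Let `H ∈ R[X]`
have vanishing second formal derivative.  Let `b ≤ p−1` and `j ≡ b (mod p)`.  Then the
`(b+1)`-fold composite `θ^{(j+b(p−1))} ∘ ⋯ ∘ θ^{(j+(p−1))} ∘ θ^{(j)}` sends `f` to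
`H^{b+1}` times the `(b+1)`-st formal derivative of `f`. -/
theorem stmt_5 (p : ℕ) (hp : p.Prime) (R : Type*) [CommRing R] [CharP R p]
    (H : R[X]) (hH : derivative (derivative H) = 0)
    (b : ℕ) (hb : b ≤ p - 1) (j : ℤ) (hj : (p : ℤ) ∣ j - (b : ℤ))
    (f : R[X]) :
    thetaDownIter H p (b + 1) j f = H ^ (b + 1) * derivative^[b + 1] f := by
  exact thetaDownIter_eq p R H hH (b + 1) j (by push_cast; simpa using hj) f
end

section
/- Let p be a prime, K a field of characteristic p, H := X − X^p ∈ K[X], and b ∈ ℕ with b ≤ p−1. For f ∈ K[X] one has H·f′ = b·f if and only if there exists g ∈ K[X] with f = H^b · g(X^p) (i.e. f equals H^b times the polynomial obtained from g by substituting X^p for X). -/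
open Polynomial

/-- Let `p` be a prime, `K` a field of characteristic `p`, `H := X − X^p`, and `b ≤ p−1`.
For `f ∈ K[X]` one has `H·f′ = b·f` if and only if `f = H^b · g(X^p)` for some `g ∈ K[X]`. -/
theorem stmt_6 (p : ℕ) (hp : p.Prime) (K : Type*) [Field K] [CharP K p]
    (b : ℕ) (hb : b ≤ p - 1) (f : K[X]) :
    (X - X ^ p) * derivative f = (b : K[X]) * f ↔
      ∃ g : K[X], f = (X - X ^ p) ^ b * Polynomial.expand K p g := by
  have hp2 := hp.two_le
  have hH : (X - X ^ p : K[X]) ≠ 0 := by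
    intro h
    have h1 := congrArg (fun q : K[X] => q.coeff 1) h
    have h2 : p ≠ 1 := by omega
    simp [coeff_X_pow, h2.symm] at h1
  have hd : derivative (X - X ^ p : K[X]) = 1 := by
    simp [derivative_X_pow]
  induction b generalizing f with
  | zero =>
    constructor
    · intro h
      have h0 : derivative f = 0 := by
        simpa [hH] using h
      exact ⟨contract p f, by rw [expand_contract p h0 hp.ne_zero]; simp⟩
    · rintro ⟨g, rfl⟩
      simp [derivative_expand]
  | succ b ih =>
    have ih := ih (by omega)
    have hu : ((b + 1 : ℕ) : K) ≠ 0 := by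
      intro h
      have := Nat.le_of_dvd (by omega) ((CharP.cast_eq_zero_iff K p (b + 1)).1 h)
      omega
    constructor
    · intro h
      have hdvd : (X - X ^ p : K[X]) ∣ f := by
        refine ⟨C (((b + 1 : ℕ) : K)⁻¹) * derivative f, ?_⟩
        have hc : C (((b + 1 : ℕ) : K)⁻¹) * ((b + 1 : ℕ) : K[X]) = 1 := by
          rw [← C_eq_natCast, ← C_mul, inv_mul_cancel₀ hu, C_1]
        calc f = (C (((b + 1 : ℕ) : K)⁻¹) * ((b + 1 : ℕ) : K[X])) * f := by rw [hc, one_mul]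
          _ = _ := by rw [mul_assoc, ← h]; ring
      obtain ⟨g, rfl⟩ := hdvd
      have hg : (X - X ^ p) * derivative g = (b : K[X]) * g := by
        apply mul_left_cancel₀ hH
        rw [derivative_mul, hd] at h
        push_cast at h
        linear_combination h
      obtain ⟨k, hk⟩ := (ih g).1 hg
      exact ⟨k, by rw [pow_succ', mul_assoc, ← hk]⟩
    · rintro ⟨g, rfl⟩
      have h := (ih ((X - X ^ p) ^ b * expand K p g)).2 ⟨g, rfl⟩
      rw [pow_succ', mul_assoc, derivative_mul, hd]
      push_cast
      linear_combination (X - X ^ p) * h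
end

section
/- Let p be a prime, K a field of characteristic p, and let D : K[X] → K[X] be the K-linear map D(f) = (X − X^p)·f′. Let b ∈ ℕ with b ≤ p−1. Then for f ∈ K[X], ((D − b)∘(D − (b−1))∘⋯∘(D − 1)∘D)(f) = 0 if and only if every exponent e occurring in f with nonzero coefficient satisfies e mod p ≤ b. (Here D − c denotes the operator f ↦ D(f) − c·f; these factors pairwise commute, so the order of composition is immaterial.) -/
open Polynomial

/-- The operator `D : f ↦ (X − X^p)·f′` on `K[X]`. -/
noncomputable def Dtheta {K : Type*} [Field K] (p : ℕ) (f : K[X]) : K[X] :=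
  (X - X ^ p) * derivative f

/-- `DthetaComp p n f = ((D − n) ∘ ⋯ ∘ (D − 1) ∘ D) f`, where `D − c : f ↦ D f − c·f`. -/
noncomputable def DthetaComp {K : Type*} [Field K] (p : ℕ) : ℕ → K[X] → K[X]
  | 0, f => Dtheta p f
  | n + 1, f => Dtheta p (DthetaComp p n f) - ((n + 1 : ℕ) : K[X]) * DthetaComp p n f

theorem dvd_descFactorial_aux (p : ℕ) (hp : p.Prime) (b e : ℕ) :
    p ∣ e.descFactorial (b + 1) ↔ e % p ≤ b := by
  rw [Nat.descFactorial_eq_prod_range, hp.prime.dvd_finset_prod_iff]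
  constructor
  · rintro ⟨i, hi, hd⟩
    rw [Finset.mem_range] at hi
    by_cases h : i ≤ e
    · have h1 : i % p = e % p := (Nat.modEq_iff_dvd' h).2 hd
      have h2 := Nat.mod_le i p
      omega
    · have h2 := Nat.mod_le e p
      omega
  · intro h
    exact ⟨e % p, Finset.mem_range.2 (by omega), Nat.dvd_sub_mod e⟩

theorem DthetaComp_eq (p : ℕ) (K : Type*) [Field K] [CharP K p] (b : ℕ) (f : K[X]) :
    DthetaComp p b f = (X - X ^ p) ^ (b + 1) * derivative^[b + 1] f := by
  have hH : derivative (X - X ^ p : K[X]) = 1 := by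
    simp [derivative_X_pow]
  induction b with
  | zero => simp [DthetaComp, Dtheta]
  | succ n ih =>
    rw [DthetaComp, ih, Dtheta, derivative_mul, derivative_pow, hH,
      Function.iterate_succ_apply' derivative (n + 1)]
    simp only [Nat.add_sub_cancel, map_natCast]
    ring

/-- Let `p` be a prime, `K` a field of characteristic `p`, `D f = (X − X^p)·f′` and
`b ≤ p−1`.  Then `((D − b) ∘ ⋯ ∘ (D − 1) ∘ D) f = 0` if and only if every exponent `e`
occurring in `f` with nonzero coefficient satisfies `e % p ≤ b`. -/
theorem stmt_7 (p : ℕ) (hp : p.Prime) (K : Type*) [Field K] [CharP K p]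
    (b : ℕ) (hb : b ≤ p - 1) (f : K[X]) :
    DthetaComp p b f = 0 ↔ ∀ e ∈ f.support, e % p ≤ b := by
  have hH : (X - X ^ p : K[X]) ≠ 0 := by
    intro h
    have h1 : derivative (X - X ^ p : K[X]) = 1 := by simp [derivative_X_pow]
    rw [h] at h1
    simp at h1
  rw [DthetaComp_eq, mul_eq_zero, or_iff_right (pow_ne_zero _ hH)]
  constructor
  · intro h e he
    by_cases hl : e ≤ b
    · exact (Nat.mod_le e p).trans hl
    · obtain ⟨m, rfl⟩ : ∃ m, e = m + (b + 1) := ⟨e - (b + 1), by omega⟩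
      have hc := congrArg (fun g => coeff g m) h
      simp only [coeff_iterate_derivative, coeff_zero, nsmul_eq_mul, mul_eq_zero] at hc
      rw [← dvd_descFactorial_aux p hp, ← CharP.cast_eq_zero_iff K p]
      exact hc.resolve_right (mem_support_iff.1 he)
  · intro h
    ext m
    rw [coeff_iterate_derivative, coeff_zero, nsmul_eq_mul, mul_eq_zero]
    by_cases hc : f.coeff (m + (b + 1)) = 0
    · exact Or.inr hc
    · left
      rw [CharP.cast_eq_zero_iff K p, dvd_descFactorial_aux p hp]
      exact h _ (mem_support_iff.2 hc)
end

section
/- Let p be an odd prime, S a commutative ring of characteristic p, and R = S[T, T₁₁, T₁₂, T₂₂] the polynomial ring in four variables. For ij ∈ {11, 12, 22} let D_ij : R → R be the S-linear operator D_ij(f) = (T_ij + 1)·∂f/∂T_ij. Define Θ₁(f) = T²·D₁₁(f) − T·D₁₂(f) + D₂₂(f) and Θ₃(f) = T^{2p}·D₁₁(f) − T^p·D₁₂(f) + D₂₂(f). Then the p-fold composite of Θ₁ equals Θ₃, i.e. Θ₁^p = Θ₃ as S-linear endomorphisms of R. -/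
open MvPolynomial

/-- The operator `D_ij : f ↦ (T_ij + 1)·∂f/∂T_ij` on `S[T, T₁₁, T₁₂, T₂₂]`,
with the variables indexed by `Fin 4` as `0 ↦ T`, `1 ↦ T₁₁`, `2 ↦ T₁₂`, `3 ↦ T₂₂`. -/
noncomputable def Dij {S : Type*} [CommRing S] (i : Fin 4) (f : MvPolynomial (Fin 4) S) :
    MvPolynomial (Fin 4) S :=
  (X i + 1) * pderiv i f

/-- `Θ₁ f = T²·D₁₁ f − T·D₁₂ f + D₂₂ f`. -/
noncomputable def Theta1 {S : Type*} [CommRing S] (f : MvPolynomial (Fin 4) S) :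
    MvPolynomial (Fin 4) S :=
  X 0 ^ 2 * Dij 1 f - X 0 * Dij 2 f + Dij 3 f

/-- `Θ₂ f = 2T^{p+1}·D₁₁ f − (T + T^p)·D₁₂ f + 2·D₂₂ f`. -/
noncomputable def Theta2 {S : Type*} [CommRing S] (p : ℕ) (f : MvPolynomial (Fin 4) S) :
    MvPolynomial (Fin 4) S :=
  2 * X 0 ^ (p + 1) * Dij 1 f - (X 0 + X 0 ^ p) * Dij 2 f + 2 * Dij 3 f

/-- `Θ₃ f = T^{2p}·D₁₁ f − T^p·D₁₂ f + D₂₂ f`. -/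
noncomputable def Theta3 {S : Type*} [CommRing S] (p : ℕ) (f : MvPolynomial (Fin 4) S) :
    MvPolynomial (Fin 4) S :=
  X 0 ^ (2 * p) * Dij 1 f - X 0 ^ p * Dij 2 f + Dij 3 f

/-- `θ₄⁽ᴺ⁾ f = (T − T^p)·∂f/∂T + N·f`. -/
noncomputable def theta4 {S : Type*} [CommRing S] (p : ℕ) (N : ℤ) (f : MvPolynomial (Fin 4) S) :
    MvPolynomial (Fin 4) S :=
  (X 0 - X 0 ^ p) * pderiv 0 f + (N : MvPolynomial (Fin 4) S) * f

theorem Theta1_add {S : Type*} [CommRing S] (f g : MvPolynomial (Fin 4) S) :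
    Theta1 (f + g) = Theta1 f + Theta1 g := by
  simp only [Theta1, Dij, map_add]; ring

theorem Theta1_iter_add {S : Type*} [CommRing S] (n : ℕ) (f g : MvPolynomial (Fin 4) S) :
    Theta1^[n] (f + g) = Theta1^[n] f + Theta1^[n] g := by
  induction n generalizing f g with
  | zero => rfl
  | succ n ih => simp only [Function.iterate_succ_apply, Theta1_add, ih]

/-- Monomials in the shifted coordinates. -/
noncomputable def mon {S : Type*} [CommRing S] (r : S) (a b c d : ℕ) : MvPolynomial (Fin 4) S :=
  C r * X 0 ^ a * (X 1 + 1) ^ b * (X 2 + 1) ^ c * (X 3 + 1) ^ d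

theorem mul_nat_pow {R : Type*} [CommRing R] (y : R) (b : ℕ) :
    y * ((b : R) * y ^ (b - 1)) = b * y ^ b := by
  cases b with
  | zero => simp
  | succ n => simp only [Nat.add_sub_cancel, pow_succ]; ring

theorem Dij_mon1 {S : Type*} [CommRing S] (r : S) (a b c d : ℕ) :
    Dij 1 (mon r a b c d) = b * mon r a b c d := by
  have := mul_nat_pow (X 1 + 1 : MvPolynomial (Fin 4) S) b
  simp [Dij, mon, pderiv_X, Derivation.leibniz, Derivation.leibniz_pow, Pi.single_apply]
  linear_combination (C r * X 0 ^ a * (X 2 + 1) ^ c * (X 3 + 1) ^ d) * this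

theorem Dij_mon2 {S : Type*} [CommRing S] (r : S) (a b c d : ℕ) :
    Dij 2 (mon r a b c d) = c * mon r a b c d := by
  have := mul_nat_pow (X 2 + 1 : MvPolynomial (Fin 4) S) c
  simp [Dij, mon, pderiv_X, Derivation.leibniz, Derivation.leibniz_pow, Pi.single_apply]
  linear_combination (C r * X 0 ^ a * (X 1 + 1) ^ b * (X 3 + 1) ^ d) * this

theorem Dij_mon3 {S : Type*} [CommRing S] (r : S) (a b c d : ℕ) :
    Dij 3 (mon r a b c d) = d * mon r a b c d := by
  have := mul_nat_pow (X 3 + 1 : MvPolynomial (Fin 4) S) d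
  simp [Dij, mon, pderiv_X, Derivation.leibniz, Derivation.leibniz_pow, Pi.single_apply]
  linear_combination (C r * X 0 ^ a * (X 1 + 1) ^ b * (X 2 + 1) ^ c) * this

theorem Dij_mul {S : Type*} [CommRing S] (i : Fin 4) (u f : MvPolynomial (Fin 4) S)
    (hu : pderiv i u = 0) : Dij i (u * f) = u * Dij i f := by
  simp [Dij, Derivation.leibniz, hu]; ring

theorem Theta1_iter_mon {S : Type*} [CommRing S] (r : S) (a b c d n : ℕ) :
    Theta1^[n] (mon r a b c d) = (X 0 ^ 2 * (b : MvPolynomial (Fin 4) S) - X 0 * (c : MvPolynomial (Fin 4) S)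
      + (d : MvPolynomial (Fin 4) S)) ^ n * mon r a b c d := by
  induction n with
  | zero => simp
  | succ n ih =>
    have key : ∀ i : Fin 4, i ≠ 0 →
        pderiv i ((X 0 ^ 2 * (b : MvPolynomial (Fin 4) S) - X 0 * (c : MvPolynomial (Fin 4) S)
          + (d : MvPolynomial (Fin 4) S)) ^ n) = 0 := by
      intro i hi
      simp [pderiv_X, Derivation.leibniz, Derivation.leibniz_pow, Pi.single_apply, hi.symm]
    rw [Function.iterate_succ_apply', ih, Theta1, Dij_mul _ _ _ (key 1 (by decide)),
      Dij_mul _ _ _ (key 2 (by decide)), Dij_mul _ _ _ (key 3 (by decide)),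
      Dij_mon1, Dij_mon2, Dij_mon3]
    ring

theorem natCast_pow_p {R : Type*} [CommRing R] (p : ℕ) [Fact p.Prime] [CharP R p] (n : ℕ) :
    (n : R) ^ p = n := by
  have := congrArg (ZMod.castHom dvd_rfl R) (ZMod.pow_card (n : ZMod p))
  rwa [map_pow, map_natCast] at this

/-- Let `p` be an odd prime and `S` a commutative ring of characteristic `p`.  Then the
`p`-fold composite of `Θ₁` equals `Θ₃` on `S[T, T₁₁, T₁₂, T₂₂]`. -/
theorem stmt_10 (p : ℕ) (hp : p.Prime) (hodd : Odd p)
    (S : Type*) [CommRing S] [CharP S p] (f : MvPolynomial (Fin 4) S) :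
    (Theta1 (S := S))^[p] f = Theta3 p f := by
  haveI : Fact p.Prime := ⟨hp⟩
  let Y : Fin 4 → MvPolynomial (Fin 4) S := ![X 0, X 1 + 1, X 2 + 1, X 3 + 1]
  let Z : Fin 4 → MvPolynomial (Fin 4) S := ![X 0, X 1 - 1, X 2 - 1, X 3 - 1]
  have hf : aeval Y (aeval Z f) = f := by
    have : (aeval Y).comp (aeval Z) = AlgHom.id S (MvPolynomial (Fin 4) S) := by
      ext1 i
      fin_cases i <;> simp [Y, Z]
    exact DFunLike.congr_fun this f
  rw [← hf]
  induction aeval Z f using MvPolynomial.induction_on' with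
  | add g h hg hh =>
    rw [map_add, Theta1_iter_add, hg, hh]
    simp only [Theta3, Dij, map_add]; ring
  | monomial m r =>
    have hm : aeval Y (monomial m r) = mon r (m 0) (m 1) (m 2) (m 3) := by
      rw [aeval_monomial, Finsupp.prod_fintype _ _ (by simp)]
      simp [Fin.prod_univ_four, Y, mon, mul_assoc, algebraMap_eq]
    rw [hm, Theta1_iter_mon, Theta3, Dij_mon1, Dij_mon2, Dij_mon3, add_pow_char, sub_pow_char,
      mul_pow, mul_pow, natCast_pow_p, natCast_pow_p, natCast_pow_p]
    ring
end

section
/- Let p be a prime, S a commutative ring of characteristic p, and R = S[T, T₁₁, T₁₂, T₂₂] the polynomial ring in four variables. For ij ∈ {11, 12, 22} let D_ij : R → R be the S-linear operator D_ij(f) = (T_ij + 1)·∂f/∂T_ij. Define Θ₁(f) = T²·D₁₁(f) − T·D₁₂(f) + D₂₂(f), Θ₂(f) = 2T^{p+1}·D₁₁(f) − (T + T^p)·D₁₂(f) + 2·D₂₂(f), and for N ∈ ℤ, θ₄⁽ᴺ⁾(f) = (T − T^p)·∂f/∂T + N·f. Then for every N ∈ ℤ, Θ₁ ∘ θ₄⁽ᴺ⁾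 − θ₄⁽ᴺ⁻²⁾ ∘ Θ₁ = Θ₂ as S-linear endomorphisms of R. -/
open MvPolynomial

/-- Let `p` be a prime and `S` a commutative ring of characteristic `p`.  Then for every
`N : ℤ`, `Θ₁ ∘ θ₄⁽ᴺ⁾ − θ₄⁽ᴺ⁻²⁾ ∘ Θ₁ = Θ₂` on `S[T, T₁₁, T₁₂, T₂₂]`. -/
theorem stmt_11 (p : ℕ) (hp : p.Prime) (S : Type*) [CommRing S] [CharP S p]
    (N : ℤ) (f : MvPolynomial (Fin 4) S) :
    Theta1 (theta4 p N f) - theta4 p (N - 2) (Theta1 f) = Theta2 p f := by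
  have comm : ∀ i : Fin 4, pderiv i (pderiv 0 f) = pderiv 0 (pderiv i f) := by
    intro i
    have h : ⁅pderiv (R := S) i, pderiv (R := S) (0 : Fin 4)⁆ = 0 := by
      apply MvPolynomial.derivation_ext
      intro j
      simp [Derivation.commutator_apply, pderiv_X, Pi.single_apply, apply_ite]
    have h2 := congrArg (fun D => D f) h
    simpa [Derivation.commutator_apply, sub_eq_zero] using h2
  have hN : ∀ (i : Fin 4) (M : ℤ), pderiv i (M : MvPolynomial (Fin 4) S) = 0 := by
    intro i M
    exact Derivation.map_intCast _ M
  have h1 := comm 1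
  have h2 := comm 2
  have h3 := comm 3
  have e0 : ∀ i : Fin 4, i ≠ 0 → pderiv i (X 0 : MvPolynomial (Fin 4) S) = 0 :=
    fun i hi => pderiv_X_of_ne hi.symm
  have e1 : ∀ i : Fin 4, i ≠ 0 → pderiv 0 (X i : MvPolynomial (Fin 4) S) = 0 :=
    fun i hi => pderiv_X_of_ne hi
  have a1 := e0 1 (by decide)
  have a2 := e0 2 (by decide)
  have a3 := e0 3 (by decide)
  have b1 := e1 1 (by decide)
  have b2 := e1 2 (by decide)
  have b3 := e1 3 (by decide)
  simp only [Theta1, Theta2, theta4, Dij, map_add, map_sub, Derivation.leibniz,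
    Derivation.leibniz_pow, hN, a1, a2, a3, b1, b2, b3, h1, h2, h3, pderiv_X_self,
    Derivation.map_one_eq_zero, smul_eq_mul, nsmul_eq_mul]
  push_cast
  ring
end

section
/- Let p be a prime, S a commutative ring of characteristic p, and R = S[T, T₁₁, T₁₂, T₂₂] the polynomial ring in four variables. For ij ∈ {11, 12, 22} let D_ij : R → R be the S-linear operator D_ij(f) = (T_ij + 1)·∂f/∂T_ij. Define Θ₂(f) = 2T^{p+1}·D₁₁(f) − (T + T^p)·D₁₂(f) + 2·D₂₂(f), Θ₃(f) = T^{2p}·D₁₁(f) − T^p·D₁₂(f) + D₂₂(f), and for N ∈ ℤ, θ₄⁽ᴺ⁾(f) = (T − T^p)·∂f/∂T + N·f. Then for every N ∈ ℤ, Θ₂ ∘ θ₄⁽ᴺ⁾ − θ₄⁽ᴺ⁻ᵖ⁻¹⁾ ∘ Θ₂ = 2·Θ₃ as S-linear endomorphisms of R. -/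
open MvPolynomial

/-- Partial derivatives commute. -/
theorem pderiv_swap {S : Type*} [CommRing S] (i j : Fin 4) (f : MvPolynomial (Fin 4) S) :
    pderiv i (pderiv j f) = pderiv j (pderiv i f) := by
  have h : ⁅(pderiv i : Derivation S (MvPolynomial (Fin 4) S) (MvPolynomial (Fin 4) S)),
      (pderiv j : Derivation S (MvPolynomial (Fin 4) S) (MvPolynomial (Fin 4) S))⁆ = 0 := by
    apply MvPolynomial.derivation_ext
    intro k
    simp [Derivation.commutator_apply, pderiv_X, Pi.single_apply, apply_ite]
  have h2 := congrArg (fun D => D f) h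
  simpa [Derivation.commutator_apply, sub_eq_zero] using h2

/-- Let `p` be a prime and `S` a commutative ring of characteristic `p`.  Then for every
`N : ℤ`, `Θ₂ ∘ θ₄⁽ᴺ⁾ − θ₄⁽ᴺ⁻ᵖ⁻¹⁾ ∘ Θ₂ = 2·Θ₃` on `S[T, T₁₁, T₁₂, T₂₂]`. -/
theorem stmt_12 (p : ℕ) (hp : p.Prime) (S : Type*) [CommRing S] [CharP S p]
    (N : ℤ) (f : MvPolynomial (Fin 4) S) :
    Theta2 p (theta4 p N f) - theta4 p (N - ((p : ℤ) + 1)) (Theta2 p f) = 2 * Theta3 p f := by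
  have hpc : (p : MvPolynomial (Fin 4) S) = 0 := CharP.cast_eq_zero _ p
  have h2 : ∀ i : Fin 4, pderiv i (2 : MvPolynomial (Fin 4) S) = 0 := fun i => by
    simpa using (pderiv i : Derivation S (MvPolynomial (Fin 4) S) _).map_natCast 2
  have hN : ∀ i : Fin 4, pderiv i (N : MvPolynomial (Fin 4) S) = 0 := fun i => by
    simpa using (pderiv i : Derivation S (MvPolynomial (Fin 4) S) _).map_intCast N
  have h00 : pderiv 0 (X 0 : MvPolynomial (Fin 4) S) = 1 := pderiv_X_self 0
  have hX : ∀ i j : Fin 4, j ≠ i → pderiv i (X j : MvPolynomial (Fin 4) S) = 0 :=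
    fun i j h => pderiv_X_of_ne h
  have a1 := hX 1 0 (by decide)
  have a2 := hX 2 0 (by decide)
  have a3 := hX 3 0 (by decide)
  have b1 := hX 0 1 (by decide)
  have b2 := hX 0 2 (by decide)
  have b3 := hX 0 3 (by decide)
  have c1 := pderiv_swap 1 0 f
  have c2 := pderiv_swap 2 0 f
  have c3 := pderiv_swap 3 0 f
  simp only [Theta2, Theta3, theta4, Dij, map_add, map_sub, Derivation.leibniz,
    Derivation.leibniz_pow, smul_eq_mul, nsmul_eq_mul, h2, hN, h00, a1, a2, a3, b1, b2, b3,
    c1, c2, c3, pderiv_one, hpc, Int.cast_sub, Int.cast_add, Int.cast_natCast, Int.cast_one,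
    Nat.cast_add, Nat.cast_one, Nat.add_sub_cancel]
  ring
end

section
/- Let p be an odd prime, S a commutative ring of characteristic p, and R = S[T, T₁₁, T₁₂, T₂₂] the polynomial ring in four variables. For ij ∈ {11, 12, 22} let D_ij : R → R be the S-linear operator D_ij(f) = (T_ij + 1)·∂f/∂T_ij. Let Θ := 4·(D₁₁ ∘ D₂₂) − D₁₂ ∘ D₁₂. Then the p-fold composite of Θ equals Θ, i.e. Θ^p = Θ as S-linear endomorphisms of R. -/
open MvPolynomial

noncomputable def shiftHom (S : Type*) [CommRing S] :
    MvPolynomial (Fin 4) S →ₐ[S] MvPolynomial (Fin 4) S :=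
  aeval (fun i => X i + 1)

theorem pderiv_shiftHom {S : Type*} [CommRing S] (i : Fin 4) (g : MvPolynomial (Fin 4) S) :
    pderiv i (shiftHom S g) = shiftHom S (pderiv i g) := by
  induction g using MvPolynomial.induction_on with
  | C a => simp [shiftHom]
  | add f g hf hg => simp [hf, hg]
  | mul_X f j hf =>
    have hX : shiftHom S (X j) = X j + 1 := by simp [shiftHom]
    have h1 : pderiv i (X j + 1 : MvPolynomial (Fin 4) S) = shiftHom S (pderiv i (X j)) := by
      by_cases h : j = i
      · subst h; simp
      · simp [pderiv_X_of_ne h]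
    rw [map_mul, pderiv_mul, pderiv_mul, hf, hX, h1, map_add (shiftHom S), map_mul, map_mul, hX]

theorem Dij_shiftHom {S : Type*} [CommRing S] (i : Fin 4) (g : MvPolynomial (Fin 4) S) :
    Dij i (shiftHom S g) = shiftHom S (X i * pderiv i g) := by
  rw [Dij, pderiv_shiftHom, map_mul]
  simp [shiftHom]

theorem Dij_monomial {S : Type*} [CommRing S] (i : Fin 4) (a : Fin 4 →₀ ℕ) (c : S) :
    Dij i (shiftHom S (monomial a c)) = (a i : MvPolynomial (Fin 4) S) * shiftHom S (monomial a c) := by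
  rw [Dij_shiftHom, X_mul_pderiv_monomial, map_nsmul, nsmul_eq_mul]

theorem Dij_natCast_mul {S : Type*} [CommRing S] (i : Fin 4) (n : ℕ)
    (g : MvPolynomial (Fin 4) S) : Dij i ((n : MvPolynomial (Fin 4) S) * g) = (n : MvPolynomial (Fin 4) S) * Dij i g := by
  rw [← nsmul_eq_mul, Dij, Dij, map_nsmul, nsmul_eq_mul]; ring

theorem Dij_add {S : Type*} [CommRing S] (i : Fin 4) (f g : MvPolynomial (Fin 4) S) :
    Dij i (f + g) = Dij i f + Dij i g := by
  simp [Dij, mul_add]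

/-- Let `p` be an odd prime and `S` a commutative ring of characteristic `p`.  The operator
`Θ := 4·(D₁₁ ∘ D₂₂) − D₁₂ ∘ D₁₂` on `S[T, T₁₁, T₁₂, T₂₂]` satisfies `Θ^p = Θ`. -/
theorem stmt_16 (p : ℕ) (hp : p.Prime) (hodd : Odd p)
    (S : Type*) [CommRing S] [CharP S p] (f : MvPolynomial (Fin 4) S) :
    (fun g : MvPolynomial (Fin 4) S => 4 * Dij 1 (Dij 3 g) - Dij 2 (Dij 2 g))^[p] f
      = 4 * Dij 1 (Dij 3 f) - Dij 2 (Dij 2 f) := by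
  have : Fact p.Prime := ⟨hp⟩
  set Θ : MvPolynomial (Fin 4) S → MvPolynomial (Fin 4) S :=
    fun g => 4 * Dij 1 (Dij 3 g) - Dij 2 (Dij 2 g) with hΘ
  change Θ^[p] f = Θ f
  have hadd : ∀ u v, Θ (u + v) = Θ u + Θ v := by
    intro u v
    simp only [hΘ, Dij_add]
    ring
  have hadd' : ∀ (n : ℕ) u v, Θ^[n] (u + v) = Θ^[n] u + Θ^[n] v := by
    intro n
    induction n with
    | zero => intro u v; rfl
    | succ n ih => intro u v; simp only [Function.iterate_succ_apply, hadd, ih]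
  have key : ∀ g, Θ^[p] (shiftHom S g) = Θ (shiftHom S g) := by
    intro g
    induction g using MvPolynomial.induction_on' with
    | add u v hu hv => rw [map_add, hadd', hadd, hu, hv]
    | monomial a c =>
      set e := shiftHom S (monomial a c) with he
      set n : ℤ := 4 * (a 1 * a 3) - a 2 * a 2 with hn
      have hΘn : ∀ k : ℕ, Θ ((n : MvPolynomial (Fin 4) S) ^ k * e)
          = (n : MvPolynomial (Fin 4) S) ^ (k + 1) * e := by
        intro k
        have hD : ∀ (i : Fin 4) (m : ℤ) (g : MvPolynomial (Fin 4) S),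
            Dij i ((m : MvPolynomial (Fin 4) S) * g) = (m : MvPolynomial (Fin 4) S) * Dij i g := by
          intro i m g
          rw [← zsmul_eq_mul, Dij, Dij, map_zsmul, zsmul_eq_mul]; ring
        have hpow : (n : MvPolynomial (Fin 4) S) ^ k = ((n ^ k : ℤ) : MvPolynomial (Fin 4) S) := by
          push_cast; rfl
        rw [pow_succ, hpow]
        simp only [hΘ, hD, he, Dij_monomial, Dij_natCast_mul]
        rw [hn]
        push_cast
        ring
      have hit : ∀ k : ℕ, Θ^[k] e = (n : MvPolynomial (Fin 4) S) ^ k * e := by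
        intro k
        induction k with
        | zero => simp
        | succ k ih => rw [Function.iterate_succ_apply', ih, hΘn]
      have h1 := hit 1
      rw [Function.iterate_one, pow_one] at h1
      rw [hit, h1]
      congr 1
      have hz : ((n : ZMod p)) ^ p = (n : ZMod p) := ZMod.pow_card _
      have := congrArg (ZMod.castHom (dvd_refl p) (MvPolynomial (Fin 4) S)) hz
      rwa [map_pow, map_intCast] at this
  have hsurj : shiftHom S (aeval (fun i => X i - 1) f) = f := by
    have : (shiftHom S).comp (aeval (fun i => X i - 1)) = AlgHom.id S _ := by
      ext i
      simp [shiftHom]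
    exact DFunLike.congr_fun this f
  rw [← hsurj]
  exact key _
end

section
/- Let p be an odd prime, S a commutative ring of characteristic p, and R = S[T, T₁₁, T₁₂, T₂₂] the polynomial ring in four variables. For ij ∈ {11, 12, 22} let D_ij : R → R be the S-linear operator D_ij(f) = (T_ij + 1)·∂f/∂T_ij. Define Θ₂(f) = 2T^{p+1}·D₁₁(f) − (T + T^p)·D₁₂(f) + 2·D₂₂(f) and, for N ∈ ℤ, θ₄⁽ᴺ⁾(f) = (T − T^p)·∂f/∂T + N·f. Then the p-fold composite of Θ₂ satisfies Θ₂^p(f) = 2·T^{p(p+1)}·D₁₁(f) − (T^p + T^{p²})·D₁₂(f) + 2·D₂₂(f) for all f, and consequently Θ₂^p ∘ θ₄⁽ᴺ⁾ = θ₄⁽ᴺ⁾ ∘ Θ₂^p for every N ∈ ℤ. -/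
open MvPolynomial

namespace Stmt17
variable {S : Type*} [CommRing S]

/-- `Dij` as a linear endomorphism. -/
noncomputable def DL (S : Type*) [CommRing S] (i : Fin 4) : Module.End S (MvPolynomial (Fin 4) S) :=
  LinearMap.mulLeft S (X i + 1) * (pderiv i).toLinearMap

/-- Multiplication operator. -/
noncomputable abbrev ML (a : MvPolynomial (Fin 4) S) : Module.End S (MvPolynomial (Fin 4) S) :=
  LinearMap.mulLeft S a

lemma DL_apply (i : Fin 4) (f : MvPolynomial (Fin 4) S) : DL S i f = Dij i f := rfl

lemma pd_comm (i j : Fin 4) (f : MvPolynomial (Fin 4) S) :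
    pderiv i (pderiv j f) = pderiv j (pderiv i f) := by
  have h : ⁅pderiv (R := S) i, pderiv (R := S) j⁆ = 0 := by
    apply MvPolynomial.derivation_ext
    intro k
    rw [Derivation.commutator_apply]
    simp only [pderiv_X, Pi.single_apply]
    split_ifs <;> simp
  have h2 := congrArg (fun d => d f) h
  simp only [Derivation.commutator_apply] at h2
  exact sub_eq_zero.mp h2

lemma DL_comm (i j : Fin 4) (hij : i ≠ j) : Commute (DL S i) (DL S j) := by
  apply LinearMap.ext
  intro f
  simp only [Module.End.mul_apply, DL_apply, Dij, Derivation.leibniz, map_add, smul_eq_mul,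
    pderiv_X_of_ne hij, pderiv_X_of_ne hij.symm, pderiv_one, pd_comm i j]
  ring

lemma ML_DL_comm (i : Fin 4) (a : MvPolynomial (Fin 4) S) (ha : pderiv i a = 0) :
    Commute (ML a) (DL S i) := by
  apply LinearMap.ext
  intro f
  simp only [Module.End.mul_apply, DL_apply, Dij, Derivation.leibniz, smul_eq_mul, ha,
    LinearMap.mulLeft_apply]
  ring

lemma ML_pow (a : MvPolynomial (Fin 4) S) (n : ℕ) : ML a ^ n = ML (a ^ n) :=
  LinearMap.pow_mulLeft _ _ a n

lemma charEnd (p : ℕ) [CharP S p] : CharP (Module.End S (MvPolynomial (Fin 4) S)) p := by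
  refine ⟨fun n => ?_⟩
  rw [← CharP.cast_eq_zero_iff (MvPolynomial (Fin 4) S) p n]
  constructor
  · intro h
    have := congrArg (fun d => d 1) h
    simpa using this
  · intro h
    apply LinearMap.ext
    intro f
    simp [h]

lemma DL_pow (p : ℕ) (hp : p.Prime) [CharP S p] (i : Fin 4) : DL S i ^ p = DL S i := by
  have := Fact.mk hp
  have := charEnd (S := S) p
  apply LinearMap.ext
  intro f
  induction f using MvPolynomial.induction_on with
  | C a =>
    have h : DL S i (C a) = 0 := by simp [DL_apply, Dij]
    obtain ⟨k, hk⟩ := Nat.exists_eq_succ_of_ne_zero hp.ne_zero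
    rw [h, hk, pow_succ, Module.End.mul_apply, h, map_zero]
  | add f g hf hg => rw [map_add, map_add, hf, hg]
  | mul_X f j hf =>
    by_cases hij : j = i
    · subst hij
      have h1 : SemiconjBy (ML (X j + 1)) (DL S j + 1) (DL S j) := by
        apply LinearMap.ext
        intro f
        simp only [Module.End.mul_apply, DL_apply, Dij, Derivation.leibniz, smul_eq_mul,
          LinearMap.mulLeft_apply, LinearMap.add_apply, Module.End.one_apply, map_add,
          pderiv_X_self, pderiv_one]
        ring
      have h2 := h1.pow_right p
      rw [add_pow_char_of_commute p (Commute.one_right _), one_pow] at h2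
      have e1 := congrArg (fun d => d f) h1.eq
      have e2 := congrArg (fun d => d f) h2.eq
      simp only [Module.End.mul_apply, LinearMap.add_apply, Module.End.one_apply, hf] at e1 e2
      have e : f * X j = ML (X j + 1) f - f := by
        simp only [LinearMap.mulLeft_apply]; ring
      rw [e, map_sub, map_sub, hf, ← e1, ← e2]
    · have h1 := ML_DL_comm (S := S) i (X j) (pderiv_X_of_ne hij)
      have h2 := h1.pow_right p
      have e1 := congrArg (fun d => d f) h1.eq
      have e2 := congrArg (fun d => d f) h2.eq
      simp only [Module.End.mul_apply, hf] at e1 e2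
      have e : f * X j = ML (X j) f := by
        simp only [LinearMap.mulLeft_apply]; ring
      rw [e, ← e1, ← e2]

lemma ML_mul_comm {i j : Fin 4} (hij : i ≠ j) (a b : MvPolynomial (Fin 4) S)
    (ha : pderiv j a = 0) (hb : pderiv i b = 0) :
    Commute (ML a * DL S i) (ML b * DL S j) := by
  have hab : Commute (ML a) (ML b) := by
    apply LinearMap.ext
    intro f
    simp only [Module.End.mul_apply, LinearMap.mulLeft_apply]
    ring
  exact (hab.mul_right (ML_DL_comm j a ha)).mul_left
    ((ML_DL_comm i b hb).symm.mul_right (DL_comm i j hij))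

lemma term_pow (p : ℕ) (hp : p.Prime) [CharP S p] (i : Fin 4) (a : MvPolynomial (Fin 4) S)
    (ha : pderiv i a = 0) : (ML a * DL S i) ^ p = ML (a ^ p) * DL S i := by
  rw [(ML_DL_comm i a ha).mul_pow, ML_pow, DL_pow p hp]

lemma Theta2_pow (p : ℕ) (hp : p.Prime) [CharP S p] (f : MvPolynomial (Fin 4) S) :
    (Theta2 (S := S) p)^[p] f
          = 2 * X 0 ^ (p * (p + 1)) * Dij 1 f - (X 0 ^ p + X 0 ^ (p ^ 2)) * Dij 2 f
              + 2 * Dij 3 f := by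
  have := Fact.mk hp
  have := charEnd (S := S) p
  have two : (2 : MvPolynomial (Fin 4) S) ^ p = 2 := by
    rw [← one_add_one_eq_two, add_pow_char, one_pow]
  have p2 : ∀ i : Fin 4, pderiv i (2 : MvPolynomial (Fin 4) S) = 0 := fun i => by
    rw [← one_add_one_eq_two, map_add, pderiv_one, add_zero]
  have pT : ∀ (i : Fin 4) (n : ℕ), i ≠ 0 → pderiv i (X 0 ^ n : MvPolynomial (Fin 4) S) = 0 :=
    fun i n hi => by rw [pderiv_pow, pderiv_X_of_ne hi.symm, mul_zero]
  have pa : ∀ i : Fin 4, i ≠ 0 → pderiv i (2 * X 0 ^ (p+1) : MvPolynomial (Fin 4) S) = 0 :=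
    fun i hi => by rw [pderiv_mul, p2, pT i _ hi]; simp
  have pb : ∀ i : Fin 4, i ≠ 0 → pderiv i (X 0 + X 0 ^ p : MvPolynomial (Fin 4) S) = 0 :=
    fun i hi => by rw [map_add, pT i _ hi, pderiv_X_of_ne hi.symm, add_zero]
  have hT : Theta2 (S := S) p = ⇑((ML (2 * X 0 ^ (p+1)) * DL S 1 - ML (X 0 + X 0 ^ p) * DL S 2
      + ML 2 * DL S 3 : Module.End S (MvPolynomial (Fin 4) S))) := rfl
  have c12 := ML_mul_comm (S := S) (i := 1) (j := 2) (by decide) _ _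
    (pa 2 (by decide)) (pb 1 (by decide))
  have c13 := ML_mul_comm (S := S) (i := 1) (j := 3) (by decide) _ _ (pa 3 (by decide)) (p2 1)
  have c23 := ML_mul_comm (S := S) (i := 2) (j := 3) (by decide) _ _ (pb 3 (by decide)) (p2 2)
  rw [hT, ← Module.End.coe_pow, add_pow_char_of_commute p (c13.sub_left c23),
    sub_pow_char_of_commute p (c12), term_pow p hp _ _ (pa 1 (by decide)),
    term_pow p hp _ _ (pb 2 (by decide)), term_pow p hp _ _ (p2 3), mul_pow, two, add_pow_char,
    ← pow_mul, ← pow_mul, mul_comm (p+1) p, ← pow_two]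
  rfl

end Stmt17

/-- Let `p` be an odd prime and `S` a commutative ring of characteristic `p`.  Then the
`p`-fold composite of `Θ₂` satisfies
`Θ₂^p f = 2·T^{p(p+1)}·D₁₁ f − (T^p + T^{p²})·D₁₂ f + 2·D₂₂ f` for every `f`, and
consequently `Θ₂^p` commutes with `θ₄⁽ᴺ⁾` for every `N : ℤ`. -/
theorem stmt_17 (p : ℕ) (hp : p.Prime) (hodd : Odd p)
    (S : Type*) [CommRing S] [CharP S p] :
    (∀ f : MvPolynomial (Fin 4) S,
        (Theta2 (S := S) p)^[p] f
          = 2 * X 0 ^ (p * (p + 1)) * Dij 1 f - (X 0 ^ p + X 0 ^ (p ^ 2)) * Dij 2 f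
              + 2 * Dij 3 f)
      ∧ ∀ (N : ℤ) (f : MvPolynomial (Fin 4) S),
          (Theta2 (S := S) p)^[p] (theta4 p N f) = theta4 p N ((Theta2 (S := S) p)^[p] f) := by
  refine ⟨fun f => Stmt17.Theta2_pow p hp f, fun N f => ?_⟩
  have hp0 : ((p : ℕ) : MvPolynomial (Fin 4) S) = 0 := CharP.cast_eq_zero _ p
  have p2 : ∀ i : Fin 4, pderiv i (2 : MvPolynomial (Fin 4) S) = 0 := fun i => by
    rw [← one_add_one_eq_two, map_add, pderiv_one, add_zero]
  have pN : ∀ i : Fin 4, pderiv i (N : MvPolynomial (Fin 4) S) = 0 := fun i =>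
    Derivation.map_intCast _ _
  have pT : ∀ (i : Fin 4) (n : ℕ), i ≠ 0 → pderiv i (X 0 ^ n : MvPolynomial (Fin 4) S) = 0 :=
    fun i n hi => by rw [pderiv_pow, pderiv_X_of_ne hi.symm, mul_zero]
  have pT0 : ∀ (n : ℕ), pderiv 0 (X 0 ^ (p * n) : MvPolynomial (Fin 4) S) = 0 :=
    fun n => by rw [pderiv_pow, Nat.cast_mul, hp0]; simp
  have q0 : pderiv 0 (X 0 ^ p : MvPolynomial (Fin 4) S) = 0 := by simpa using pT0 1
  have q1 : pderiv 0 (X 0 ^ (p ^ 2) : MvPolynomial (Fin 4) S) = 0 := by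
    rw [pow_two]; exact pT0 p
  have key : ∀ i : Fin 4, i ≠ 0 → Dij i (theta4 p N f) = theta4 p N (Dij i f) := by
    intro i hi
    simp only [theta4, Dij, map_add, map_sub, pderiv_mul, pN, pT i _ hi, pderiv_X_of_ne hi.symm,
      pderiv_X_of_ne hi, pderiv_one, Stmt17.pd_comm i 0]
    ring
  rw [Stmt17.Theta2_pow p hp, Stmt17.Theta2_pow p hp, key 1 (by decide), key 2 (by decide),
    key 3 (by decide)]
  simp only [theta4, map_add, map_sub, pderiv_mul, p2, pT0, q0, q1]
  ring
end

section
/- Let p be a prime and S a commutative ring of characteristic p. Let f ∈ S[x,y] be a homogeneous polynomial of degree d, and set b := d mod p. Let D : S[x,y] → S[x,y] be the operator D(g) = x^p·∂g/∂x + y^p·∂g/∂y. Then (x^p·y − x·y^p)^{b+1} divides D^{b+1}(f), the (b+1)-fold iterate of D applied to f. -/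
open MvPolynomial

namespace Serre

/-- Serre's operator as a derivation. -/
noncomputable def D (p : ℕ) (S : Type*) [CommRing S] :
    Derivation S (MvPolynomial (Fin 2) S) (MvPolynomial (Fin 2) S) :=
  (X 0 ^ p : MvPolynomial (Fin 2) S) • pderiv 0 + (X 1 ^ p : MvPolynomial (Fin 2) S) • pderiv 1

theorem D_apply (p : ℕ) (S : Type*) [CommRing S] (g : MvPolynomial (Fin 2) S) :
    D p S g = X 0 ^ p * pderiv 0 g + X 1 ^ p * pderiv 1 g := rfl

theorem pd_comm {S : Type*} [CommRing S] (i j : Fin 2) (g : MvPolynomial (Fin 2) S) :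
    pderiv i (pderiv j g) = pderiv j (pderiv i g) := by
  have h : ⁅(pderiv i : Derivation S (MvPolynomial (Fin 2) S) (MvPolynomial (Fin 2) S)),
      (pderiv j : Derivation S (MvPolynomial (Fin 2) S) (MvPolynomial (Fin 2) S))⁆ = 0 := by
    apply MvPolynomial.derivation_ext
    intro k
    rw [Derivation.commutator_apply, pderiv_X, pderiv_X]
    simp only [Pi.single_apply]
    split_ifs <;> simp
  have := congrArg (fun E => E g) h
  simpa [Derivation.commutator_apply, sub_eq_zero] using this

section
variable {p : ℕ} {S : Type*} [CommRing S] [CharP S p]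

theorem D_pow (E : Derivation S (MvPolynomial (Fin 2) S) (MvPolynomial (Fin 2) S))
    (g : MvPolynomial (Fin 2) S) : E (g ^ p) = 0 := by
  rw [Derivation.leibniz_pow]
  simp

theorem pd_D (i : Fin 2) (g : MvPolynomial (Fin 2) S) :
    pderiv i (D p S g) = D p S (pderiv i g) := by
  simp only [D_apply, map_add, Derivation.leibniz, D_pow, smul_eq_mul, mul_zero, add_zero]
  rw [pd_comm i 0, pd_comm i 1]

theorem D_X (hp : p.Prime) (i : Fin 2) : D p S (X i) = X i ^ p := by
  fin_cases i <;> simp [D_apply, pderiv_X]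

/-- Dickson's invariant. -/
noncomputable def H (p : ℕ) (S : Type*) [CommRing S] : MvPolynomial (Fin 2) S :=
  X 0 ^ p * X 1 - X 0 * X 1 ^ p

theorem D_H (hp : p.Prime) : D p S (H p S) = 0 := by
  simp only [H, map_sub, Derivation.leibniz, D_pow, D_X hp, smul_eq_mul]
  ring

theorem iter0 (hp : p.Prime) (f : MvPolynomial (Fin 2) S) (c : ℕ)
    (hf : X 0 * pderiv 0 f + X 1 * pderiv 1 f = (c : MvPolynomial (Fin 2) S) * f) (n : ℕ) :
    X 0 * (D p S)^[n + 1] f = ((c : MvPolynomial (Fin 2) S) - (n : MvPolynomial (Fin 2) S)) * X 0 ^ p * (D p S)^[n] f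
      - H p S * (D p S)^[n] (pderiv 1 f) := by
  induction n with
  | zero =>
    simp only [Function.iterate_succ, Function.iterate_zero, Function.comp, id, D_apply, H]
    push_cast
    linear_combination X 0 ^ p * hf
  | succ n ih =>
    have := congrArg (D p S) ih
    simp only [map_sub, Derivation.leibniz, D_pow, D_X hp, D_H hp, smul_eq_mul,
      ← Function.iterate_succ_apply', Derivation.map_natCast] at this
    push_cast
    linear_combination this

theorem iter1 (hp : p.Prime) (f : MvPolynomial (Fin 2) S) (c : ℕ)
    (hf : X 0 * pderiv 0 f + X 1 * pderiv 1 f = (c : MvPolynomial (Fin 2) S) * f) (n : ℕ) :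
    X 1 * (D p S)^[n + 1] f = ((c : MvPolynomial (Fin 2) S) - (n : MvPolynomial (Fin 2) S)) * X 1 ^ p * (D p S)^[n] f
      + H p S * (D p S)^[n] (pderiv 0 f) := by
  induction n with
  | zero =>
    simp only [Function.iterate_succ, Function.iterate_zero, Function.comp, id, D_apply, H]
    push_cast
    linear_combination X 1 ^ p * hf
  | succ n ih =>
    have := congrArg (D p S) ih
    simp only [map_add, map_sub, Derivation.leibniz, D_pow, D_X hp, D_H hp, smul_eq_mul,
      ← Function.iterate_succ_apply', Derivation.map_natCast] at this
    push_cast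
    linear_combination this

theorem H_ne [IsDomain S] (hp : p.Prime) : H p S ≠ 0 := by
  intro h
  have := congrArg (pderiv 1) h
  simp only [H, map_sub, Derivation.leibniz, D_pow, smul_eq_mul, pderiv_X] at this
  have h2 := congrArg (eval ![(1:S), 0]) this
  simp [hp.ne_zero] at h2

theorem main [IsDomain S] (hp : p.Prime) (n : ℕ) : ∀ (f : MvPolynomial (Fin 2) S),
    X 0 * pderiv 0 f + X 1 * pderiv 1 f = (n : MvPolynomial (Fin 2) S) * f →
    H p S ^ (n + 1) ∣ (D p S)^[n + 1] f := by
  have step : ∀ (n : ℕ) (f : MvPolynomial (Fin 2) S),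
      X 0 * pderiv 0 f + X 1 * pderiv 1 f = (n : MvPolynomial (Fin 2) S) * f →
      (∀ i, H p S ^ n ∣ (D p S)^[n] (pderiv i f)) →
      H p S ^ (n + 1) ∣ (D p S)^[n + 1] f := by
    intro n f hf h
    obtain ⟨u, hu⟩ := h 0
    obtain ⟨v, hv⟩ := h 1
    have h0 := iter0 hp f n hf n
    have h1 := iter1 hp f n hf n
    rw [hv] at h0
    rw [hu] at h1
    have e : X 1 * v = - (X 0 * u) := by
      apply mul_left_cancel₀ (pow_ne_zero (n + 1) (H_ne (S := S) hp))
      linear_combination X 1 * h0 - X 0 * h1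
    have hd : (X 0 : MvPolynomial (Fin 2) S) ∣ X 1 * v := ⟨-u, by rw [e]; ring⟩
    have hX : Prime (X 0 : MvPolynomial (Fin 2) S) := MvPolynomial.X_prime
    rcases hX.dvd_or_dvd hd with h | ⟨w, rfl⟩
    · simp [MvPolynomial.X_dvd_X] at h
    · refine ⟨-w, ?_⟩
      apply mul_left_cancel₀ hX.ne_zero
      linear_combination h0
  induction n with
  | zero =>
    intro f hf
    exact step 0 f hf (by simp)
  | succ n ih =>
    intro f hf
    refine step (n + 1) f hf fun i => ih _ ?_
    have := congrArg (pderiv i) hf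
    simp only [map_add, Derivation.leibniz, smul_eq_mul, Derivation.map_natCast, pd_comm i] at this
    fin_cases i
    · simp [pderiv_X] at this ⊢
      linear_combination this
    · simp [pderiv_X] at this ⊢
      linear_combination this

theorem map_iter {T : Type*} [CommRing T] (φ : T →+* S) (n : ℕ) (g : MvPolynomial (Fin 2) T) :
    map φ ((D p T)^[n] g) = (D p S)^[n] (map φ g) := by
  induction n generalizing g with
  | zero => rfl
  | succ n ih =>
    rw [Function.iterate_succ_apply, Function.iterate_succ_apply, ih]
    simp [D_apply, pderiv_map]

end

end Serre

theorem stmt_18 (p : ℕ) (hp : p.Prime) (S : Type*) [CommRing S] [CharP S p]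
    (d : ℕ) (f : MvPolynomial (Fin 2) S) (hf : f.IsHomogeneous d) :
    (X 0 ^ p * X 1 - X 0 * X 1 ^ p) ^ (d % p + 1) ∣
      (fun g : MvPolynomial (Fin 2) S =>
        X 0 ^ p * pderiv 0 g + X 1 ^ p * pderiv 1 g)^[d % p + 1] f := by
  haveI : Fact p.Prime := ⟨hp⟩
  change Serre.H p S ^ (d % p + 1) ∣ (Serre.D p S)^[d % p + 1] f
  have hsum : ∀ (n : ℕ) (t : Finset (Fin 2 →₀ ℕ)) (g : (Fin 2 →₀ ℕ) → MvPolynomial (Fin 2) S),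
      (Serre.D p S)^[n] (∑ v ∈ t, g v) = ∑ v ∈ t, (Serre.D p S)^[n] (g v) := by
    intro n t g
    induction n generalizing g with
    | zero => rfl
    | succ n ih => simp [ih]
  rw [f.as_sum, hsum]
  refine Finset.dvd_sum fun s hs => ?_
  have hs' : s.degree = d := by
    have := hf (mem_support_iff.mp hs)
    rwa [Finsupp.degree_eq_weight_one]
  have e : monomial s (coeff s f)
      = coeff s f • map (ZMod.castHom (dvd_refl p) S) (monomial s (1 : ZMod p)) := by
    simp [smul_monomial]
  have sm : ∀ (n : ℕ) (c : S) (g : MvPolynomial (Fin 2) S),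
      (Serre.D p S)^[n] (c • g) = c • (Serre.D p S)^[n] g := by
    intro n c g
    induction n generalizing g with
    | zero => rfl
    | succ n ih => simp [ih]
  rw [e, sm, ← Serre.map_iter]
  rw [smul_eq_C_mul]
  refine Dvd.dvd.mul_left ?_ _
  have hm : (monomial s (1 : ZMod p)).IsHomogeneous d := isHomogeneous_monomial _ hs'
  have eu := hm.sum_X_mul_pderiv
  have key := Serre.main (p := p) (S := ZMod p) hp (d % p) (monomial s 1) (by
    have hc : ((d % p : ℕ) : MvPolynomial (Fin 2) (ZMod p)) = d := by
      conv_rhs => rw [← Nat.mod_add_div d p]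
      simp
    rw [hc]
    simpa [Fin.sum_univ_two] using eu)
  have := map_dvd (map (ZMod.castHom (dvd_refl p) S)) key
  simpa [Serre.H] using this
end
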